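/- Let I ⊆ ℤ₂[[x₁,…,x₆]] be the square-free monomial ideal I = (x₁x₂x₃, x₁x₂x₄, x₁x₃x₅, x₁x₄x₆, x₁x₅x₆, x₂x₃x₆, x₂x₄x₅, x₂x₅x₆, x₃x₄x₅, x₃x₄x₆), let T = ℤ₂[[x₁,…,x₆, y₁,…,y₄]], and let J = IT + (y₁, y₂)T. Then H⁷_J(T) = 0 and the local cohomology module H⁶_J(T) is annihilated by 2. -/

import Mathlib

/-!
STATEMENT 13: Let `I ⊆ ℤ₂[[x₁,…,x₆]]` be the monomial ideal of the standard triangulation of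
ℝP², let `T = ℤ₂[[x₁,…,x₆,y₁,…,y₄]]` and `J = IT + (y₁,y₂)T`.  Then `H⁷_J(T) = 0` and
`H⁶_J(T)` is annihilated by 2.  Variables are 0-indexed: `xᵢ₊₁ = X i`, `yⱼ₊₁ = X (6+j)`.
-/

noncomputable section

/-- The power series ring `T = ℤ₂[[x₁,…,x₆,y₁,…,y₄]]` in ten variables. -/
abbrev T : Type := MvPowerSeries (Fin 10) ℤ_[2]

/-- `x i` is the variable `xᵢ₊₁`. -/
def x (i : Fin 6) : T := MvPowerSeries.X (i.castAdd 4)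

/-- `y j` is the variable `yⱼ₊₁`. -/
def y (j : Fin 4) : T := MvPowerSeries.X (j.natAdd 6)

/-- The generators of the monomial ideal `I` (standard triangulation of ℝP²), viewed in `T`. -/
def Igens : Set T :=
  {x 0 * x 1 * x 2, x 0 * x 1 * x 3, x 0 * x 2 * x 4, x 0 * x 3 * x 5,
   x 0 * x 4 * x 5, x 1 * x 2 * x 5, x 1 * x 3 * x 4, x 1 * x 4 * x 5,
   x 2 * x 3 * x 4, x 2 * x 3 * x 5}

/-- `J = IT + (y₁, y₂)T`. -/
def J : Ideal T := Ideal.span Igens + Ideal.span {y 0, y 1}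

/-!
The local cohomology of `T` along `J` is the colimit of `Extⁱ(T ⧸ K, T)` over any system of ideals
cofinal with the powers of `J` (`smul_localCohomology_eq_zero`). Take `K` generated by the `t`-th
powers of the monomial generators of `J`: it is the square-free monomial ideal of `J` evaluated at
`t`-th powers of variables. So it suffices that `T ⧸ K` has projective dimension at most `6` and
that `2 Ext⁶(T ⧸ K, T) = 0`; since `y₁ᵗ, y₂ᵗ` is a regular sequence modulo the part of `K` coming
from `I`, this follows from projective dimension at most `4` and `2 Ext⁴ = 0` for the ideal of
`ℝP²` (`ext_regular`).

The six-vertex `ℝP²` is a five-vertex Möbius band whose boundary, a pentagon, is coned off from the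
sixth vertex. Hence, with `A ⊆ B` the Stanley–Reisner ideals of the band and of the pentagon and
`b` the variable of the cone point, the ideal of `ℝP²` is `P = A + bB`, and there is an exact
sequence `0 → R/A → R/A × R/B → R/P → 0` (`ext_union`). Both `R/A` and `R/B` have explicit free
resolutions `0 → R → R⁵ → R⁵ → R` (`mobRes`, `pentRes`), so `R/P` has projective dimension at
most `4`, and `Ext⁴(R/P, Y)` is a quotient of the cokernel of `Ext³(R/B, Y) → Ext³(R/A, Y)`.
The comparison map of the two resolutions is multiplication by `2` in top degree, because the boundary
of the Möbius band winds twice around its core (`mob_pent_exists`); thus `2` kills this cokernel.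

Everything about the variables that is used is the rule for colons of monomial ideals by monomials
(`Indep`), which also holds for powers of the variables (`indep_X_pow`).
-/

namespace RP2

open CategoryTheory Abelian Limits

/-! ### Local cohomology and cofinal systems of ideals -/

theorem nsmul_extMk {R : Type} [CommRing R] {X Y : ModuleCat.{0} R} (P : ProjectiveResolution X)
    {n : ℕ} (f : P.complex.X n ⟶ Y) (m : ℕ) (hm : n + 1 = m)
    (hf : P.complex.d m n ≫ f = 0) (k : ℕ) :
    P.extMk (k • f) m hm (by simp [hf]) = k • P.extMk f m hm hf := by
  induction k with
  | zero => simp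
  | succ k ih =>
    simp only [succ_nsmul]
    rw [← ih, ProjectiveResolution.add_extMk]

/-- The derived functor `_root_.Ext`, used to define local cohomology, is killed by `k` as soon as
the Yoneda-type `Abelian.Ext` is: both are computed by cocycles on a projective resolution. -/
theorem ext_smul_eq_zero {R : Type} [CommRing R] (X Y : ModuleCat.{0} R) (p k : ℕ)
    (h : ∀ e : Ext X Y (p + 1), k • e = 0)
    (u : ((_root_.Ext R (ModuleCat.{0} R) (p + 1)).obj (Opposite.op X)).obj Y) :
    (k : R) • u = 0 := by
  let P := projectiveResolution X
  let K := P.complex.linearYonedaObj R Y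
  have key : ∀ v : K.homology (p + 1), (k : R) • v = 0 := by
    intro v
    obtain ⟨z, rfl⟩ := (ModuleCat.epi_iff_surjective (K.homologyπ (p + 1))).1 inferInstance v
    have hz : K.d (p + 1) (p + 2) (K.iCycles (p + 1) z) = 0 :=
      ConcreteCategory.congr_hom (K.iCycles_d (p + 1) (p + 2)) z
    let f : P.complex.X (p + 1) ⟶ Y := K.iCycles (p + 1) z
    have hf : P.complex.d (p + 2) (p + 1) ≫ f = 0 := hz
    have h0 : P.extMk (k • f) (p + 2) rfl (by simp [hf]) = 0 := by
      rw [nsmul_extMk P f (p + 2) rfl hf k]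
      exact h _
    obtain ⟨g, hg⟩ := (P.extMk_eq_zero_iff _ (p + 2) rfl _ p rfl).1 h0
    let g' : K.X p := g
    have hz2 : (k : R) • z = K.toCycles p (p + 1) g' := by
      apply (ModuleCat.mono_iff_injective (K.iCycles (p + 1))).1 inferInstance
      refine Eq.trans ?_ (ConcreteCategory.congr_hom (K.toCycles_i p (p + 1)) g').symm
      rw [map_smul, Nat.cast_smul_eq_nsmul]
      exact hg.symm
    rw [← map_smul, hz2]
    exact ConcreteCategory.congr_hom (K.toCycles_comp_homologyπ p (p + 1)) g'
  have e : _ ≅ K.homology (p + 1) := P.isoExt (R := R) (p + 1) Y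
  have h1 := key (e.hom u)
  rw [← map_smul] at h1
  have h2 := congrArg e.inv h1
  rw [map_zero] at h2
  exact (ConcreteCategory.congr_hom e.hom_inv_id _).symm.trans h2

/-- If the ideals `K` for which `k` kills `Extⁿ⁺¹(R ⧸ K, Y)` are cofinal with the powers of `J`,
then `k` kills `Hⁿ⁺¹_J(Y) = colim Extⁿ⁺¹(R ⧸ J ^ t, Y)`: the transition map from the `t`-th to
the `s`-th term factors through `Extⁿ⁺¹(R ⧸ K, Y)`. -/
theorem smul_localCohomology_eq_zero {R : Type} [CommRing R] (J : Ideal R) (n k : ℕ) (Y : ModuleCat.{0} R)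
    (h : ∀ t : ℕ, ∃ (s : ℕ) (K : Ideal R), J ^ s ≤ K ∧ K ≤ J ^ t ∧
      ∀ e : Ext (ModuleCat.of R (R ⧸ K)) Y (n + 1), k • e = 0)
    (u : (localCohomology J (n + 1)).obj Y) : (k : R) • u = 0 := by
  let F := localCohomology.diagram (localCohomology.idealPowersDiagram J) (n + 1) ⋙
    (evaluation _ _).obj Y
  have hc : IsColimit (((evaluation _ _).obj Y).mapCocone
      (colimit.cocone (localCohomology.diagram (localCohomology.idealPowersDiagram J) (n + 1)))) :=
    isColimitOfPreserves _ (colimit.isColimit _)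
  obtain ⟨j, v, hv⟩ := Concrete.isColimit_exists_rep _ hc u
  obtain ⟨s₀, K, hs, hK, hE⟩ := h j.unop.unop
  let s := max s₀ j.unop.unop
  have hs' : J ^ s ≤ K := (Ideal.pow_le_pow_right (le_max_left _ _)).trans hs
  let φ : j ⟶ Opposite.op (Opposite.op s) :=
    Quiver.Hom.op (Quiver.Hom.op (homOfLE (le_max_right s₀ j.unop.unop)))
  let a : ModuleCat.of R (R ⧸ J ^ s) ⟶ ModuleCat.of R (R ⧸ K) :=
    ModuleCat.ofHom (Submodule.mapQ _ _ LinearMap.id hs')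
  let b : ModuleCat.of R (R ⧸ K) ⟶ ModuleCat.of R (R ⧸ J ^ j.unop.unop) :=
    ModuleCat.ofHom (Submodule.mapQ _ _ LinearMap.id hK)
  have hab : (localCohomology.ringModIdeals (localCohomology.idealPowersDiagram J)).map φ.unop
      = a ≫ b := by
    ext x
    obtain ⟨y, rfl⟩ := Ideal.Quotient.mk_surjective x
    rfl
  have hφ : F.map φ = ((_root_.Ext R (ModuleCat.{0} R) (n + 1)).map b.op).app Y ≫
      ((_root_.Ext R (ModuleCat.{0} R) (n + 1)).map a.op).app Y := by
    rw [← NatTrans.comp_app, ← Functor.map_comp, ← op_comp, ← hab]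
    rfl
  have hw : (k : R) • F.map φ v = 0 := by
    rw [hφ]
    refine (map_smul (((_root_.Ext R (ModuleCat.{0} R) (n + 1)).map a.op).app Y).hom (k : R)
      ((((_root_.Ext R (ModuleCat.{0} R) (n + 1)).map b.op).app Y).hom v)).symm.trans ?_
    rw [ext_smul_eq_zero _ Y n k hE, map_zero]
    rfl
  have hn := ConcreteCategory.congr_hom ((((evaluation _ _).obj Y).mapCocone
      (colimit.cocone (localCohomology.diagram (localCohomology.idealPowersDiagram J) (n + 1)))).w φ) v
  rw [← hv, ← hn]
  refine (map_smul ((((evaluation _ _).obj Y).mapCocone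
      (colimit.cocone (localCohomology.diagram (localCohomology.idealPowersDiagram J)
        (n + 1)))).ι.app _).hom (k : R) (F.map φ v)).symm.trans ?_
  rw [hw, map_zero]
  rfl

/-! ### Cyclic modules with a resolution of length three -/

/-- In a short exact sequence `0 → X₁ → X₂ → X₃ → 0` with `X₁, X₂` of projective dimension at
most `n`, `Extⁿ⁺¹(X₃, Y)` is the cokernel of `Extⁿ(X₂, Y) → Extⁿ(X₁, Y)`, so `2` kills it as soon as the
image of that map contains `2 Extⁿ(X₁, Y)`. -/
theorem ext_cokernel {R : Type} [CommRing R] {Y : ModuleCat.{0} R} {n : ℕ}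
    {S : ShortComplex (ModuleCat.{0} R)} (hS : S.ShortExact)
    (h₁ : HasProjectiveDimensionLT S.X₁ (n + 1)) (h₂ : HasProjectiveDimensionLT S.X₂ (n + 1))
    (h : ∀ v : Ext S.X₁ Y n, ∃ w : Ext S.X₂ Y n,
      (Ext.mk₀ S.f).comp w (zero_add n) = 2 • v) :
    HasProjectiveDimensionLT S.X₃ (n + 2) ∧ ∀ e : Ext S.X₃ Y (n + 1), 2 • e = 0 := by
  refine ⟨hS.hasProjectiveDimensionLT_X₃ (n + 1) h₁
    (hasProjectiveDimensionLT_of_ge S.X₂ (n + 1) (n + 2) (by lia)), fun e => ?_⟩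
  obtain ⟨v, rfl⟩ := Ext.contravariant_sequence_exact₃ hS Y e
    (Ext.eq_zero_of_hasProjectiveDimensionLT _ (n + 1) le_rfl) (add_comm 1 n)
  obtain ⟨w, hw⟩ := h v
  rw [two_nsmul, ← Ext.comp_add, ← two_nsmul, ← hw]
  simp

/-- A three-step free resolution `0 → R → R⁵ → R⁵ → R` of the cyclic module
`R ⧸ range d₁`. -/
structure Res (R : Type) [CommRing R] where
  d₁ : (Fin 5 → R) →ₗ[R] R
  d₂ : (Fin 5 → R) →ₗ[R] (Fin 5 → R)
  d₃ : R →ₗ[R] (Fin 5 → R)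
  exact₁ : Function.Exact d₂ d₁
  exact₂ : Function.Exact d₃ d₂
  inj₃ : Function.Injective d₃

namespace Res

variable {R : Type} [CommRing R] (F G : Res R)

/-- `0 → range d₁ → R → R ⧸ range d₁ → 0`. -/
abbrev S₁ : ShortComplex (ModuleCat.{0} R) :=
  ModuleCat.shortComplexOfCompEqZero (LinearMap.range F.d₁).subtype (LinearMap.range F.d₁).mkQ
    (LinearMap.ext fun x => (Submodule.Quotient.mk_eq_zero _).2 x.2)

/-- `0 → ker d₁ → R⁵ → range d₁ → 0`. -/
abbrev S₂ : ShortComplex (ModuleCat.{0} R) :=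
  ModuleCat.shortComplexOfCompEqZero (LinearMap.ker F.d₁).subtype F.d₁.rangeRestrict
    (by ext x; simp)

/-- `0 → R → R⁵ → ker d₁ → 0`. -/
abbrev S₃ : ShortComplex (ModuleCat.{0} R) :=
  ModuleCat.shortComplexOfCompEqZero F.d₃
    (F.d₂.codRestrict (LinearMap.ker F.d₁) fun x => F.exact₁.apply_apply_eq_zero x)
    (LinearMap.ext fun x => Subtype.ext (F.exact₂.apply_apply_eq_zero x))

theorem shortExact₁ : F.S₁.ShortExact := by
  refine ModuleCat.shortComplex_shortExact _ ?_ ?_ ?_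
  · exact LinearMap.exact_subtype_mkQ _
  · exact Submodule.subtype_injective _
  · exact Submodule.mkQ_surjective _

theorem shortExact₂ : F.S₂.ShortExact := by
  refine ModuleCat.shortComplex_shortExact _ ?_ ?_ ?_
  · intro x
    simp [Subtype.ext_iff]
  · exact Submodule.subtype_injective _
  · exact LinearMap.surjective_rangeRestrict _

theorem shortExact₃ : F.S₃.ShortExact := by
  refine ModuleCat.shortComplex_shortExact _ ?_ ?_ ?_
  · intro x
    exact Subtype.ext_iff.trans (F.exact₂ x)
  · exact F.inj₃
  · rintro ⟨x, hx⟩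
    obtain ⟨y, rfl⟩ := (F.exact₁ x).1 hx
    exact ⟨y, rfl⟩

/-- The resolved module `R ⧸ range d₁`. -/
abbrev Q : ModuleCat.{0} R := ModuleCat.of R (R ⧸ LinearMap.range F.d₁)

instance projective₁ : Projective F.S₁.X₂ :=
  (ModuleCat.of R R).projective_of_free (Module.Basis.singleton Unit R)
instance projective₂ : Projective F.S₂.X₂ :=
  ModuleCat.projective_of_free (Pi.basisFun R (Fin 5))
instance projective₃ : Projective F.S₃.X₂ :=
  ModuleCat.projective_of_free (Pi.basisFun R (Fin 5))
instance projective₃' : Projective F.S₃.X₁ :=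
  ModuleCat.projective_of_free (Module.Basis.singleton Unit R)

theorem hasProjectiveDimensionLT : HasProjectiveDimensionLT F.Q 4 := by
  have h3 := F.shortExact₃.hasProjectiveDimensionLT_X₃ 1 inferInstance inferInstance
  have h2 := F.shortExact₂.hasProjectiveDimensionLT_X₃ 2 h3 inferInstance
  exact F.shortExact₁.hasProjectiveDimensionLT_X₃ 3 h2 inferInstance

/-- The class in `Ext³(R ⧸ range d₁, R)` of the resolution, read as a Yoneda extension. -/
def cls : Ext F.Q (ModuleCat.of R R) 3 :=
  F.shortExact₁.extClass.comp
    (F.shortExact₂.extClass.comp F.shortExact₃.extClass (by rfl : 1 + 1 = 2)) (by rfl : 1 + 2 = 3)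

/-- Every element of `Ext³(R ⧸ range d₁, Y)` is represented by a map from the top term `R` of the
resolution, by dimension shifting. -/
theorem exists_eq_cls_comp {Y : ModuleCat.{0} R} (e : Ext F.Q Y 3) :
    ∃ f : Ext (ModuleCat.of R R) Y 0, e = F.cls.comp f (add_zero 3) := by
  obtain ⟨e₁, rfl⟩ := precomp_extClass_surjective_of_projective_X₂ Y F.shortExact₁ 2 e
  obtain ⟨e₂, rfl⟩ := precomp_extClass_surjective_of_projective_X₂ Y F.shortExact₂ 1 e₁
  obtain ⟨e₃, rfl⟩ := precomp_extClass_surjective_of_projective_X₂ Y F.shortExact₃ 0 e₂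
  refine ⟨e₃, ?_⟩
  simp [cls, Ext.precomp]

variable {F G}

/-- Given a map of resolutions lifting a surjection `π`, equal to `2` in top degree,
the image of `π^*` on `Ext³` contains `2 • Ext³`. -/
theorem exists_precomp_eq {φ₁ φ₂ : (Fin 5 → R) →ₗ[R] (Fin 5 → R)}
    (h₁ : G.d₁ ∘ₗ φ₁ = F.d₁) (h₂ : G.d₂ ∘ₗ φ₂ = φ₁ ∘ₗ F.d₂)
    (h₃ : ∀ r, φ₂ (F.d₃ r) = G.d₃ (2 • r)) (hle : LinearMap.range F.d₁ ≤ LinearMap.range G.d₁)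
    {Y : ModuleCat.{0} R} (e : Ext F.Q Y 3) :
    ∃ w : Ext G.Q Y 3, (Ext.mk₀ (ModuleCat.ofHom (Submodule.factor hle) : F.Q ⟶ G.Q)).comp w
      (zero_add 3) = 2 • e := by
  let ψ₁ : F.S₁ ⟶ G.S₁ :=
    { τ₁ := ModuleCat.ofHom (Submodule.inclusion hle)
      τ₂ := 𝟙 _
      τ₃ := ModuleCat.ofHom (Submodule.factor hle)
      comm₁₂ := rfl
      comm₂₃ := rfl }
  have hker : ∀ x ∈ LinearMap.ker F.d₁, φ₁ x ∈ LinearMap.ker G.d₁ := by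
    intro x hx
    exact (LinearMap.congr_fun h₁ x).trans hx
  let ψ₂ : F.S₂ ⟶ G.S₂ :=
    { τ₁ := ModuleCat.ofHom (φ₁.restrict hker)
      τ₂ := ModuleCat.ofHom φ₁
      τ₃ := ModuleCat.ofHom (Submodule.inclusion hle)
      comm₁₂ := rfl
      comm₂₃ := by
        ext1
        exact LinearMap.ext fun x => Subtype.ext (LinearMap.congr_fun h₁ x) }
  let ψ₃ : F.S₃ ⟶ G.S₃ :=
    { τ₁ := 2 • 𝟙 _
      τ₂ := ModuleCat.ofHom φ₂
      τ₃ := ModuleCat.ofHom (φ₁.restrict hker)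
      comm₁₂ := by
        ext1
        exact LinearMap.ext fun x => (h₃ x).symm
      comm₂₃ := by
        ext1
        exact LinearMap.ext fun x => Subtype.ext (LinearMap.congr_fun h₂ x) }
  have n₁ := ShortComplex.ShortExact.extClass_naturality F.shortExact₁ G.shortExact₁ ψ₁
  have n₂ := ShortComplex.ShortExact.extClass_naturality F.shortExact₂ G.shortExact₂ ψ₂
  have n₃ := ShortComplex.ShortExact.extClass_naturality F.shortExact₃ G.shortExact₃ ψ₃
  obtain ⟨f, rfl⟩ := F.exists_eq_cls_comp e
  refine ⟨G.cls.comp f (add_zero 3), ?_⟩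
  have key : (Ext.mk₀ (ModuleCat.ofHom (Submodule.factor hle) : F.Q ⟶ G.Q)).comp G.cls
      (zero_add 3) = F.cls.comp (Ext.mk₀ (2 • 𝟙 _)) (add_zero 3) := by
    unfold cls
    rw [← Ext.comp_assoc _ _ _ (zero_add 1) _ (by rfl)]
    refine (congrArg (fun z => Ext.comp z _ _) n₁.symm).trans ?_
    rw [Ext.comp_assoc_of_second_deg_zero, ← Ext.comp_assoc _ _ _ (zero_add 1) _ (by rfl)]
    refine (congrArg (fun z => Ext.comp _ (Ext.comp z _ _) _) n₂.symm).trans ?_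
    rw [Ext.comp_assoc_of_second_deg_zero]
    refine (congrArg (fun z => Ext.comp _ (Ext.comp _ z _) _) n₃.symm).trans ?_
    rw [Ext.comp_assoc_of_third_deg_zero, Ext.comp_assoc_of_third_deg_zero]
  rw [← Ext.comp_assoc_of_third_deg_zero, key, Ext.comp_assoc_of_third_deg_zero]
  rw [two_nsmul, two_nsmul, Ext.mk₀_add, Ext.add_comp, Ext.comp_add, Ext.mk₀_id_comp]

end Res

/-! ### The Möbius band and its boundary -/

/-- The ideal generated by the square-free monomials `∏ i ∈ A, z i`, `A ∈ 𝒜`. -/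
def monIdeal {R ι : Type} [CommRing R] (z : ι → R) (𝒜 : Finset (Finset ι)) : Ideal R :=
  Ideal.span (Set.image (fun A => ∏ i ∈ A, z i) (𝒜 : Set (Finset ι)))

/-- The family `z` behaves like a family of variables with respect to colon ideals of
square-free monomial ideals: `(z^A : A ∈ 𝒜) : z^B` is generated by the `z^(A \ B)`, hence
is contained in any `(z^C : C ∈ 𝒞)` such that each `A \ B` contains some `C ∈ 𝒞`. -/
def Indep {R ι : Type} [CommRing R] [DecidableEq ι] (z : ι → R) : Prop :=
  ∀ (𝒜 𝒞 : Finset (Finset ι)) (B : Finset ι) (f : R),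
    (∀ A ∈ 𝒜, ∃ C ∈ 𝒞, C ⊆ A \ B) → f * ∏ i ∈ B, z i ∈ monIdeal z 𝒜 → f ∈ monIdeal z 𝒞

section colon

variable {R ι : Type} [CommRing R] {z : ι → R}

theorem prod_mem_monIdeal {𝒜 : Finset (Finset ι)} {A : Finset ι} (hA : A ∈ 𝒜) :
    ∏ i ∈ A, z i ∈ monIdeal z 𝒜 :=
  Ideal.subset_span ⟨A, hA, rfl⟩

theorem monIdeal_le {𝒜 : Finset (Finset ι)} {K : Ideal R} (h : ∀ A ∈ 𝒜, ∏ i ∈ A, z i ∈ K) :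
    monIdeal z 𝒜 ≤ K := by
  rw [monIdeal, Ideal.span_le]
  rintro _ ⟨A, hA, rfl⟩
  exact h A hA

theorem mem_monIdeal_singleton {A : Finset ι} {f : R} :
    f ∈ monIdeal z {A} ↔ ∃ a, a * ∏ i ∈ A, z i = f := by
  simp [monIdeal, Ideal.mem_span_singleton']

variable [DecidableEq ι]

theorem mem_monIdeal_pair {A B : Finset ι} {f : R} :
    f ∈ monIdeal z {A, B} ↔ ∃ a b, a * ∏ i ∈ A, z i + b * ∏ i ∈ B, z i = f := by
  simp [monIdeal, Set.image_pair, Ideal.mem_span_pair]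

/-- A linear relation between five monomials confines each coefficient to a colon ideal. -/
theorem Indep.mem_of_relation (h : Indep z) (𝒞 : Finset (Finset ι)) {f c₁ c₂ c₃ c₄ : R}
    (B A₁ A₂ A₃ A₄ : Finset ι)
    (hC : ∀ A ∈ ({A₁, A₂, A₃, A₄} : Finset (Finset ι)), ∃ C ∈ 𝒞, C ⊆ A \ B)
    (rel : f * ∏ i ∈ B, z i + c₁ * ∏ i ∈ A₁, z i + c₂ * ∏ i ∈ A₂, z i + c₃ * ∏ i ∈ A₃, z i
      + c₄ * ∏ i ∈ A₄, z i = 0) : f ∈ monIdeal z 𝒞 := by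
  refine h _ 𝒞 B f hC ?_
  have : f * ∏ i ∈ B, z i = -(c₁ * ∏ i ∈ A₁, z i + c₂ * ∏ i ∈ A₂, z i + c₃ * ∏ i ∈ A₃, z i
      + c₄ * ∏ i ∈ A₄, z i) := by linear_combination rel
  rw [this]
  refine neg_mem (add_mem (add_mem (add_mem ?_ ?_) ?_) ?_) <;>
    exact Ideal.mul_mem_left _ _ (prod_mem_monIdeal (by simp))

theorem Indep.eq_zero (h : Indep z) (B : Finset ι) {f : R} (hf : f * ∏ i ∈ B, z i = 0) :
    f = 0 := by
  have := h ∅ ∅ B f (by simp) (by rw [hf]; exact zero_mem _)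
  simpa [monIdeal] using this

theorem Indep.cancel (h : Indep z) (i : ι) {f g : R} (hf : f * z i = g * z i) : f = g := by
  have := h.eq_zero {i} (f := f - g) (by simp only [Finset.prod_singleton]; linear_combination hf)
  linear_combination this

theorem Indep.exists_eq_mul (h : Indep z) {i j : ι} (hij : i ≠ j) {f g : R}
    (hf : f * z i = g * z j) : ∃ u, f = u * z j := by
  have := h {{j}} {{j}} {i} f (by simp [Finset.subset_iff, hij.symm]) (by
    rw [mem_monIdeal_singleton]
    exact ⟨g, by simp [hf]⟩)
  obtain ⟨u, hu⟩ := mem_monIdeal_singleton.1 this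
  exact ⟨u, by simpa using hu.symm⟩

end colon

section resolutions

variable {R : Type} [CommRing R]

/-- The generators `zᵢ zᵢ₊₁ zᵢ₊₃` of the Stanley–Reisner ideal of the five-vertex Möbius band
with triangles `{i, i + 1, i + 2}`, indices modulo `5`. -/
def mobGen (z : Fin 8 → R) : Fin 5 → R :=
  ![z 0 * z 1 * z 3, z 1 * z 2 * z 4, z 2 * z 3 * z 0, z 3 * z 4 * z 1, z 4 * z 0 * z 2]

/-- The generators `zᵢ zᵢ₊₁` of the Stanley–Reisner ideal of the pentagon with edges `{i, i + 2}`,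
indices modulo `5`; this pentagon is the boundary of the Möbius band of `mobGen`. -/
def pentGen (z : Fin 8 → R) : Fin 5 → R :=
  ![z 0 * z 1, z 1 * z 2, z 2 * z 3, z 3 * z 4, z 4 * z 0]

set_option maxRecDepth 10000 in
/-- The resolution of the quotient by the ideal of the Möbius band. Here `d₂` is
a weighted incidence matrix of a five-cycle and `d₃` runs once around that cycle.
Exactness is checked by eliminating one coefficient of a relation at a time. -/
def mobRes (z : Fin 8 → R) (h : Indep z) : Res R where
  d₁ := Fintype.linearCombination R (mobGen z)
  d₂ := Matrix.mulVecLin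
    !![z 2, 0, 0, -z 4, 0;
       0, z 3, 0, 0, -z 0;
       -z 1, 0, z 4, 0, 0;
       0, -z 2, 0, z 0, 0;
       0, 0, -z 3, 0, z 1]
  d₃ := LinearMap.toSpanSingleton R _ ![z 4, z 0, z 1, z 2, z 3]
  exact₁ := by
    intro c
    simp only [Fintype.linearCombination_apply, Fin.sum_univ_five, mobGen, smul_eq_mul]
    constructor
    · intro hc
      simp only [Fin.isValue, Matrix.cons_val] at hc
      obtain ⟨p, q, h0⟩ := mem_monIdeal_pair.1 <| h.mem_of_relation (f := c 0) (c₁ := c 1)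
        (c₂ := c 2) (c₃ := c 3) (c₄ := c 4) {{2}, {4}}
        {0, 1, 3} {1, 2, 4} {2, 3, 0} {3, 4, 1} {4, 0, 2} (by decide) (by
          simp [Finset.prod_insert]; linear_combination hc)
      simp only [Finset.prod_singleton] at h0
      obtain ⟨d2, h2⟩ := mem_monIdeal_singleton.1 <| h.mem_of_relation (f := c 2 + p * z 1)
        (c₁ := c 1) (c₂ := c 3 + q * z 0) (c₃ := c 4) (c₄ := 0) {{4}}
        {2, 3, 0} {1, 2, 4} {3, 4, 1} {4, 0, 2} {4, 0, 2} (by decide) (by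
          simp [Finset.prod_insert]; linear_combination hc + z 0 * z 1 * z 3 * h0)
      simp only [Finset.prod_singleton] at h2
      obtain ⟨d4, h4⟩ := mem_monIdeal_singleton.1 <| h.mem_of_relation (f := c 4 + d2 * z 3)
        (c₁ := c 1) (c₂ := c 3 + q * z 0) (c₃ := 0) (c₄ := 0) {{1}}
        {4, 0, 2} {1, 2, 4} {3, 4, 1} {3, 4, 1} {3, 4, 1} (by decide) (by
          simp [Finset.prod_insert]
          linear_combination hc + z 0 * z 1 * z 3 * h0 + z 2 * z 3 * z 0 * h2)
      simp only [Finset.prod_singleton] at h4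
      obtain ⟨d1, h1⟩ := mem_monIdeal_singleton.1 <| h.mem_of_relation (f := c 1 + d4 * z 0)
        (c₁ := c 3 + q * z 0) (c₂ := 0) (c₃ := 0) (c₄ := 0) {{3}}
        {1, 2, 4} {3, 4, 1} {3, 4, 1} {3, 4, 1} {3, 4, 1} (by decide) (by
          simp [Finset.prod_insert]
          linear_combination hc + z 0 * z 1 * z 3 * h0 + z 2 * z 3 * z 0 * h2
            + z 4 * z 0 * z 2 * h4)
      simp only [Finset.prod_singleton] at h1
      have h3 := h.eq_zero {3, 4, 1} (f := c 3 + q * z 0 + d1 * z 2) (by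
        simp [Finset.prod_insert]
        linear_combination hc + z 0 * z 1 * z 3 * h0 + z 2 * z 3 * z 0 * h2
            + z 4 * z 0 * z 2 * h4 + z 1 * z 2 * z 4 * h1)
      refine ⟨![p, d1, d2, -q, d4], ?_⟩
      ext i
      fin_cases i <;>
        simp [Matrix.mulVec, dotProduct, Fin.sum_univ_five]
      · linear_combination h0
      · linear_combination h1
      · linear_combination h2
      · linear_combination -h3
      · linear_combination h4
    · rintro ⟨d, rfl⟩
      simp [Matrix.mulVec, dotProduct, Fin.sum_univ_five]
      ring
  exact₂ := by
    intro d
    constructor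
    · intro hd
      have e0 := congrFun hd 0
      have e1 := congrFun hd 1
      have e2 := congrFun hd 2
      have e3 := congrFun hd 3
      simp [Matrix.mulVec, dotProduct, Fin.sum_univ_five] at e0 e1 e2 e3
      obtain ⟨u, h0⟩ := h.exists_eq_mul (i := 2) (j := 4) (by decide) (f := d 0) (g := d 3)
        (by linear_combination e0)
      have h3 : d 3 = u * z 2 := h.cancel 4 (by linear_combination -e0 + z 2 * h0)
      have h1 : d 1 = u * z 0 := h.cancel 2 (by linear_combination -e3 + z 0 * h3)
      have h4 : d 4 = u * z 3 := h.cancel 0 (by linear_combination -e1 + z 3 * h1)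
      have h2 : d 2 = u * z 1 := h.cancel 4 (by linear_combination e2 + z 1 * h0)
      refine ⟨u, ?_⟩
      ext i
      fin_cases i <;> simp [*]
    · rintro ⟨u, rfl⟩
      ext i
      fin_cases i <;> simp [Matrix.mulVec, dotProduct, Fin.sum_univ_five] <;> ring
  inj₃ := by
    rw [injective_iff_map_eq_zero]
    intro u hu
    have := congrFun hu 0
    exact h.eq_zero {4} (by simpa using this)

set_option maxRecDepth 10000 in
/-- The resolution of the quotient by the ideal of the pentagon; up to signs `d₃` is the
transpose of `d₁`, with entries permuted. -/
def pentRes (z : Fin 8 → R) (h : Indep z) : Res R where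
  d₁ := Fintype.linearCombination R (pentGen z)
  d₂ := Matrix.mulVecLin
    !![z 2, 0, 0, 0, -z 4;
       -z 0, z 3, 0, 0, 0;
       0, -z 1, z 4, 0, 0;
       0, 0, -z 2, z 0, 0;
       0, 0, 0, -z 3, z 1]
  d₃ := LinearMap.toSpanSingleton R _ ![z 3 * z 4, z 4 * z 0, z 0 * z 1, z 1 * z 2, z 2 * z 3]
  exact₁ := by
    intro c
    simp only [Fintype.linearCombination_apply, Fin.sum_univ_five, pentGen, smul_eq_mul]
    constructor
    · intro hc
      simp only [Fin.isValue, Matrix.cons_val] at hc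
      obtain ⟨p, q, h0⟩ := mem_monIdeal_pair.1 <| h.mem_of_relation (f := c 0) (c₁ := c 1)
        (c₂ := c 2) (c₃ := c 3) (c₄ := c 4) {{2}, {4}}
        {0, 1} {1, 2} {2, 3} {3, 4} {4, 0} (by decide) (by
          simp [Finset.prod_insert]; linear_combination hc)
      simp only [Finset.prod_singleton] at h0
      obtain ⟨r, s, h1⟩ := mem_monIdeal_pair.1 <| h.mem_of_relation (f := c 1 + p * z 0)
        (c₁ := c 2) (c₂ := c 3) (c₃ := c 4 + q * z 1) (c₄ := 0) {{3}, {4, 0}}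
        {1, 2} {2, 3} {3, 4} {4, 0} {4, 0} (by decide) (by
          simp [Finset.prod_insert]; linear_combination hc + z 0 * z 1 * h0)
      simp [Finset.prod_insert] at h1
      obtain ⟨u, h2⟩ := mem_monIdeal_singleton.1 <| h.mem_of_relation (f := c 2 + r * z 1)
        (c₁ := c 3) (c₂ := c 4 + q * z 1 + s * z 1 * z 2) (c₃ := 0) (c₄ := 0) {{4}}
        {2, 3} {3, 4} {4, 0} {4, 0} {4, 0} (by decide) (by
          simp [Finset.prod_insert]
          linear_combination hc + z 0 * z 1 * h0 + z 1 * z 2 * h1)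
      simp only [Finset.prod_singleton] at h2
      obtain ⟨w, h3⟩ := mem_monIdeal_singleton.1 <| h.mem_of_relation (f := c 3 + u * z 2)
        (c₁ := c 4 + q * z 1 + s * z 1 * z 2) (c₂ := 0) (c₃ := 0) (c₄ := 0) {{0}}
        {3, 4} {4, 0} {4, 0} {4, 0} {4, 0} (by decide) (by
          simp [Finset.prod_insert]
          linear_combination hc + z 0 * z 1 * h0 + z 1 * z 2 * h1 + z 2 * z 3 * h2)
      simp only [Finset.prod_singleton] at h3
      have h4 := h.eq_zero {4, 0} (f := c 4 + q * z 1 + s * z 1 * z 2 + w * z 3) (by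
        simp [Finset.prod_insert]
        linear_combination hc + z 0 * z 1 * h0 + z 1 * z 2 * h1 + z 2 * z 3 * h2
          + z 3 * z 4 * h3)
      refine ⟨![p - s * z 4, r, u, w, -q - s * z 2], ?_⟩
      ext i
      fin_cases i <;>
        simp [Matrix.mulVec, dotProduct, Fin.sum_univ_five]
      · linear_combination h0
      · linear_combination h1
      · linear_combination h2
      · linear_combination h3
      · linear_combination -h4
    · rintro ⟨d, rfl⟩
      simp [Matrix.mulVec, dotProduct, Fin.sum_univ_five]
      ring
  exact₂ := by
    intro d
    constructor
    · intro hd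
      have e0 := congrFun hd 0
      have e1 := congrFun hd 1
      have e2 := congrFun hd 2
      have e3 := congrFun hd 3
      simp [Matrix.mulVec, dotProduct, Fin.sum_univ_five] at e0 e1 e2 e3
      obtain ⟨a, ha⟩ := h.exists_eq_mul (i := 2) (j := 4) (by decide) (f := d 0) (g := d 4)
        (by linear_combination e0)
      obtain ⟨b, hb⟩ := h.exists_eq_mul (i := 0) (j := 3) (by decide) (f := a * z 4) (g := d 1)
        (by linear_combination -e1 - z 0 * ha)
      obtain ⟨u, hu⟩ := h.exists_eq_mul (i := 4) (j := 3) (by decide) (f := a) (g := b)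
        (by linear_combination hb)
      have h0 : d 0 = u * (z 3 * z 4) := by rw [ha, hu]; ring
      have h4 : d 4 = u * (z 2 * z 3) := h.cancel 4 (by linear_combination -e0 + z 2 * h0)
      have h1 : d 1 = u * (z 4 * z 0) := h.cancel 3 (by linear_combination e1 + z 0 * h0)
      have h2 : d 2 = u * (z 0 * z 1) := h.cancel 4 (by linear_combination e2 + z 1 * h1)
      have h3 : d 3 = u * (z 1 * z 2) := h.cancel 0 (by linear_combination e3 + z 2 * h2)
      refine ⟨u, ?_⟩
      ext i
      fin_cases i <;> simp [h0, h1, h2, h3, h4]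
    · rintro ⟨u, rfl⟩
      ext i
      fin_cases i <;> simp [Matrix.mulVec, dotProduct, Fin.sum_univ_five] <;> ring
  inj₃ := by
    rw [injective_iff_map_eq_zero]
    intro u hu
    have := congrFun hu 0
    exact h.eq_zero {3, 4} (by simpa [Finset.prod_insert] using this)

theorem mob_le_pent (z : Fin 8 → R) (h : Indep z) :
    LinearMap.range (mobRes z h).d₁ ≤ LinearMap.range (pentRes z h).d₁ := by
  simp only [mobRes, pentRes, Fintype.range_linearCombination]
  rw [Submodule.span_le]
  rintro _ ⟨i, rfl⟩
  have : mobGen z i = ![z 3, z 4, z 0, z 1, z 2] i • pentGen z i := by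
    fin_cases i <;> simp [mobGen, pentGen] <;> ring
  rw [this]
  exact Submodule.smul_mem _ _ (Submodule.subset_span ⟨i, rfl⟩)

/-- Restriction from the Möbius band to its boundary pentagon is multiplication by `2` on the
top of the resolutions, as the boundary winds twice around the core. -/
theorem mob_pent_exists (z : Fin 8 → R) (h : Indep z) {Y : ModuleCat.{0} R}
    (e : Ext (mobRes z h).Q Y 3) :
    ∃ w : Ext (pentRes z h).Q Y 3,
      (Ext.mk₀ (ModuleCat.ofHom (Submodule.factor (mob_le_pent z h)) :
        (mobRes z h).Q ⟶ (pentRes z h).Q)).comp w (zero_add 3) = 2 • e := by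
  refine Res.exists_precomp_eq
    (φ₁ := Matrix.mulVecLin (Matrix.diagonal ![z 3, z 4, z 0, z 1, z 2]))
    (φ₂ := Matrix.mulVecLin
      !![z 3, 0, 0, 0, z 4;
         z 0, z 4, 0, 0, 0;
         0, z 1, z 0, 0, 0;
         0, 0, z 2, z 1, 0;
         0, 0, 0, z 3, z 2]) ?_ ?_ ?_ (mob_le_pent z h) e
  · refine LinearMap.ext fun c => ?_
    simp [mobRes, pentRes, Fintype.linearCombination_apply, Fin.sum_univ_five, mobGen, pentGen,
      Matrix.mulVec_diagonal]
    ring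
  · refine LinearMap.ext fun c => ?_
    ext i
    fin_cases i <;>
      simp [mobRes, pentRes, Matrix.mulVec, dotProduct, Fin.sum_univ_five, Matrix.diagonal] <;> ring
  · intro r
    ext i
    fin_cases i <;> simp [mobRes, pentRes, Matrix.mulVec, dotProduct, Fin.sum_univ_five] <;> ring

end resolutions

/-! ### Coning off the boundary, and regular elements -/

section glue

variable {R : Type} [CommRing R] {Y : ModuleCat.{0} R}

/-- Let `K = A + bB` with `b` a nonzerodivisor modulo `A ≤ B`. Multiplication by `b` and the
projection give an exact sequence `0 → R ⧸ A → R ⧸ A × R ⧸ B → R ⧸ K → 0`. If the image of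
`Extⁿ(R ⧸ B, Y) → Extⁿ(R ⧸ A, Y)` contains `2 Extⁿ(R ⧸ A, Y)`, it follows that `2` kills
`Extⁿ⁺¹(R ⧸ K, Y)`. -/
theorem ext_union {A B : Ideal R} (hle : A ≤ B) (b : R)
    (hb : ∀ u, u * b ∈ A → u ∈ A) {n : ℕ}
    (hA : HasProjectiveDimensionLT (ModuleCat.of R (R ⧸ A)) (n + 1))
    (hB : HasProjectiveDimensionLT (ModuleCat.of R (R ⧸ B)) (n + 1))
    (h : ∀ e : Ext (ModuleCat.of R (R ⧸ A)) Y n, ∃ w : Ext (ModuleCat.of R (R ⧸ B)) Y n,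
      (Ext.mk₀ (ModuleCat.ofHom (Submodule.factor hle) :
        ModuleCat.of R (R ⧸ A) ⟶ ModuleCat.of R (R ⧸ B))).comp w (zero_add n) = 2 • e)
    {K : Ideal R} (hK : K = A ⊔ Ideal.span {b} * B) :
    HasProjectiveDimensionLT (ModuleCat.of R (R ⧸ K)) (n + 2) ∧
      ∀ e : Ext (ModuleCat.of R (R ⧸ K)) Y (n + 1), 2 • e = 0 := by
  have hAK : A ≤ K := hK ▸ le_sup_left
  have hBK : B ≤ Submodule.comap (LinearMap.mulLeft R b) K := fun v hv => by
    rw [hK]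
    exact Submodule.mem_sup_right (Ideal.mul_mem_mul (Ideal.mem_span_singleton_self b) hv)
  have hAA : A ≤ Submodule.comap (LinearMap.mulLeft R b) A := fun v hv => Ideal.mul_mem_left _ _ hv
  let f : (R ⧸ A) →ₗ[R] (R ⧸ A) × (R ⧸ B) :=
    (Submodule.mapQ A A (LinearMap.mulLeft R b) hAA).prod (Submodule.factor hle)
  let g : (R ⧸ A) × (R ⧸ B) →ₗ[R] (R ⧸ K) :=
    (Submodule.factor hAK).coprod (-Submodule.mapQ B K (LinearMap.mulLeft R b) hBK)
  let S : ShortComplex (ModuleCat.{0} R) := ModuleCat.shortComplexOfCompEqZero f g (by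
    refine LinearMap.ext fun u => ?_
    obtain ⟨u, rfl⟩ := Submodule.Quotient.mk_surjective _ u
    exact add_neg_cancel (Submodule.Quotient.mk (b * u) : R ⧸ K))
  have hS : S.ShortExact := by
    refine ModuleCat.shortComplex_shortExact _ ?_ ?_ ?_
    · rintro ⟨u, v⟩
      obtain ⟨u, rfl⟩ := Submodule.Quotient.mk_surjective _ u
      obtain ⟨v, rfl⟩ := Submodule.Quotient.mk_surjective _ v
      constructor
      · intro huv
        have : u - b * v ∈ K := by
          rw [← Submodule.Quotient.mk_eq_zero K, Submodule.Quotient.mk_sub, sub_eq_add_neg]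
          exact huv
        rw [hK, Submodule.mem_sup] at this
        obtain ⟨a, ha, c, hc, hac⟩ := this
        obtain ⟨w, hw, rfl⟩ := Ideal.mem_span_singleton_mul.1 hc
        refine ⟨Submodule.Quotient.mk (v + w), Prod.ext ?_ ?_⟩
        · refine (Submodule.Quotient.eq A).2 ?_
          have : b * (v + w) - u = -a := by linear_combination hac
          exact this ▸ neg_mem ha
        · refine (Submodule.Quotient.eq B).2 ?_
          simpa using hw
      · rintro ⟨w, hw⟩
        rw [← hw]
        exact LinearMap.congr_fun (ModuleCat.hom_ext_iff.1 S.zero) w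
    · refine (injective_iff_map_eq_zero f).2 fun u hu => ?_
      obtain ⟨u, rfl⟩ := Submodule.Quotient.mk_surjective _ u
      refine (Submodule.Quotient.mk_eq_zero A).2 (hb u ?_)
      rw [mul_comm]
      exact (Submodule.Quotient.mk_eq_zero A).1 (congrArg Prod.fst hu)
    · intro u
      obtain ⟨u, rfl⟩ := Submodule.Quotient.mk_surjective _ u
      exact ⟨(Submodule.Quotient.mk u, 0), by simp [S, g]⟩
  -- `R ⧸ A × R ⧸ B` is an extension of `R ⧸ B` by `R ⧸ A`.
  let S' : ShortComplex (ModuleCat.{0} R) := ModuleCat.shortComplexOfCompEqZero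
    (LinearMap.inl R (R ⧸ A) (R ⧸ B)) (LinearMap.snd R (R ⧸ A) (R ⧸ B)) (by ext; simp)
  have hS' : S'.ShortExact := by
    refine ModuleCat.shortComplex_shortExact _ ?_ ?_ ?_
    · exact Function.Exact.inl_snd
    · exact LinearMap.inl_injective
    · exact LinearMap.snd_surjective
  have h₂ : HasProjectiveDimensionLT S.X₂ (n + 1) :=
    hS'.hasProjectiveDimensionLT_X₂ (n + 1) hA hB
  refine ext_cokernel hS hA h₂ fun e => ?_
  obtain ⟨w, hw⟩ := h e
  refine ⟨(Ext.mk₀ S'.g).comp w (zero_add n), ?_⟩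
  rw [← hw, ← Ext.comp_assoc _ _ _ (zero_add 0) _ (by simp), Ext.mk₀_comp_mk₀]
  rfl

/-- Adding a regular element to `K` shifts the bound on the projective dimension and the
vanishing of `2 Extⁿ` by one. -/
theorem ext_regular {K K' : Ideal R} (y : R) (hy : ∀ u, u * y ∈ K → u ∈ K) {n : ℕ}
    (hK' : K' = K ⊔ Ideal.span {y})
    (h : HasProjectiveDimensionLT (ModuleCat.of R (R ⧸ K)) (n + 1) ∧
      ∀ e : Ext (ModuleCat.of R (R ⧸ K)) Y n, 2 • e = 0) :
    HasProjectiveDimensionLT (ModuleCat.of R (R ⧸ K')) (n + 2) ∧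
      ∀ e : Ext (ModuleCat.of R (R ⧸ K')) Y (n + 1), 2 • e = 0 := by
  have hKK : K ≤ Submodule.comap (LinearMap.mulLeft R y) K := fun v hv => Ideal.mul_mem_left _ _ hv
  have hKK' : K ≤ K' := hK' ▸ le_sup_left
  let S : ShortComplex (ModuleCat.{0} R) := ModuleCat.shortComplexOfCompEqZero
    (Submodule.mapQ K K (LinearMap.mulLeft R y) hKK) (Submodule.factor hKK') (by
    refine LinearMap.ext fun u => ?_
    obtain ⟨u, rfl⟩ := Submodule.Quotient.mk_surjective _ u
    refine (Submodule.Quotient.mk_eq_zero K').2 ?_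
    rw [hK']
    exact Submodule.mem_sup_right
      (Ideal.mul_mem_right _ _ (Ideal.mem_span_singleton_self y)))
  have hS : S.ShortExact := by
    refine ModuleCat.shortComplex_shortExact _ ?_ ?_ ?_
    · intro u
      obtain ⟨u, rfl⟩ := Submodule.Quotient.mk_surjective _ u
      constructor
      · intro hu
        have : u ∈ K' := (Submodule.Quotient.mk_eq_zero K').1 hu
        rw [hK', Submodule.mem_sup] at this
        obtain ⟨a, ha, c, hc, rfl⟩ := this
        obtain ⟨w, rfl⟩ := Ideal.mem_span_singleton'.1 hc
        refine ⟨Submodule.Quotient.mk w, (Submodule.Quotient.eq K).2 ?_⟩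
        have : y * w - (a + w * y) = -a := by ring
        exact this ▸ neg_mem ha
      · rintro ⟨w, hw⟩
        rw [← hw]
        exact LinearMap.congr_fun (ModuleCat.hom_ext_iff.1 S.zero) w
    · refine (injective_iff_map_eq_zero _).2 fun u hu => ?_
      obtain ⟨u, rfl⟩ := Submodule.Quotient.mk_surjective _ u
      refine (Submodule.Quotient.mk_eq_zero K).2 (hy u ?_)
      rw [mul_comm]
      exact (Submodule.Quotient.mk_eq_zero K).1 hu
    · exact Submodule.factor_surjective hKK'
  exact ext_cokernel hS h.1 h.1 fun e => ⟨0, by rw [h.2 e, Ext.comp_zero]⟩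

end glue

section rp2

variable {R : Type} [CommRing R]

/-- The minimal non-faces of the six-vertex `ℝP²` obtained by coning off, from the vertex `5`,
the boundary of the five-vertex Möbius band. -/
def nonfaces : Finset (Finset (Fin 8)) :=
  {{0, 1, 3}, {1, 2, 4}, {2, 3, 0}, {3, 4, 1}, {4, 0, 2},
    {0, 1, 5}, {1, 2, 5}, {2, 3, 5}, {3, 4, 5}, {4, 0, 5}}

theorem monIdeal_insert (z : Fin 8 → R) (A : Finset (Fin 8)) (𝒜 : Finset (Finset (Fin 8))) :
    monIdeal z (insert A 𝒜) = monIdeal z 𝒜 ⊔ Ideal.span {∏ i ∈ A, z i} := by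
  rw [monIdeal, Finset.coe_insert, Set.image_insert_eq, Ideal.span_insert, sup_comm]
  rfl

theorem Indep.regular {z : Fin 8 → R} (h : Indep z) {𝒜 : Finset (Finset (Fin 8))} (i : Fin 8)
    (hi : ∀ A ∈ 𝒜, i ∉ A) (u : R) (hu : u * z i ∈ monIdeal z 𝒜) : u ∈ monIdeal z 𝒜 := by
  refine h 𝒜 𝒜 {i} u (fun A hA => ⟨A, hA, ?_⟩) (by simpa using hu)
  rw [Finset.sdiff_singleton_eq_erase, Finset.erase_eq_of_notMem (hi A hA)]

theorem range_mobRes (z : Fin 8 → R) (h : Indep z) : LinearMap.range (mobRes z h).d₁ =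
    monIdeal z {{0, 1, 3}, {1, 2, 4}, {2, 3, 0}, {3, 4, 1}, {4, 0, 2}} := by
  simp only [mobRes, Fintype.range_linearCombination, monIdeal]
  congr 1
  ext f
  simp [mobGen, Finset.prod_insert, ← mul_assoc]
  tauto

theorem range_pentRes (z : Fin 8 → R) (h : Indep z) : LinearMap.range (pentRes z h).d₁ =
    monIdeal z {{0, 1}, {1, 2}, {2, 3}, {3, 4}, {4, 0}} := by
  simp only [pentRes, Fintype.range_linearCombination, monIdeal]
  congr 1
  ext f
  simp [pentGen, Finset.prod_insert]
  tauto

/-- Coning off: the ideal of `ℝP²` is the ideal of the Möbius band plus the cone variable times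
the ideal of its boundary. -/
theorem monIdeal_nonfaces (z : Fin 8 → R) : monIdeal z nonfaces =
    monIdeal z {{0, 1, 3}, {1, 2, 4}, {2, 3, 0}, {3, 4, 1}, {4, 0, 2}} ⊔
      Ideal.span {z 5} * monIdeal z {{0, 1}, {1, 2}, {2, 3}, {3, 4}, {4, 0}} := by
  rw [monIdeal, monIdeal, monIdeal, Ideal.span_mul_span', ← Ideal.span_union]
  congr 1
  ext f
  simp [nonfaces, Finset.prod_insert, Set.singleton_mul, or_assoc, mul_comm (z 5), mul_assoc]

set_option maxRecDepth 10000 in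
/-- The sequence `z 6, z 7` is regular modulo the ideal of `ℝP²`, whose quotient has projective
dimension at most `4` and `2`-torsion `Ext⁴`. -/
theorem ext_nonfaces (z : Fin 8 → R) (h : Indep z) (Y : ModuleCat.{0} R) :
    HasProjectiveDimensionLT
        (ModuleCat.of R (R ⧸ monIdeal z (insert {7} (insert {6} nonfaces)))) 7 ∧
      ∀ e : Ext (ModuleCat.of R (R ⧸ monIdeal z (insert {7} (insert {6} nonfaces)))) Y 6,
        2 • e = 0 := by
  refine ext_regular (z 7) (h.regular (𝒜 := insert {6} nonfaces) 7 (by decide))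
    (by rw [monIdeal_insert, Finset.prod_singleton]) ?_
  refine ext_regular (z 6) (h.regular (𝒜 := nonfaces) 6 (by decide))
    (by rw [monIdeal_insert, Finset.prod_singleton]) ?_
  refine ext_union (mob_le_pent z h) (z 5) ?_ (mobRes z h).hasProjectiveDimensionLT
    (pentRes z h).hasProjectiveDimensionLT (mob_pent_exists z h) ?_
  · rw [range_mobRes]
    exact h.regular 5 (by decide)
  · rw [range_mobRes, range_pentRes, monIdeal_nonfaces]

end rp2

/-! ### Powers of variables in power series rings -/

section cofinal

variable {R ι : Type} [CommRing R]

theorem monIdeal_pow_le (v : ι → R) (𝒜 : Finset (Finset ι)) (t : ℕ) :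
    monIdeal (fun i => v i ^ t) 𝒜 ≤ monIdeal v 𝒜 ^ t := by
  refine monIdeal_le fun A hA => ?_
  rw [Finset.prod_pow]
  exact Ideal.pow_mem_pow (prod_mem_monIdeal hA) t

theorem exists_pow_le_monIdeal_pow (v : ι → R) (𝒜 : Finset (Finset ι)) (t : ℕ) :
    ∃ s, monIdeal v 𝒜 ^ s ≤ monIdeal (fun i => v i ^ t) 𝒜 := by
  refine Ideal.exists_pow_le_of_le_radical_of_fg (monIdeal_le fun A hA => ⟨t, ?_⟩)
    (Submodule.fg_span (𝒜.finite_toSet.image _))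
  rw [← Finset.prod_pow]
  exact prod_mem_monIdeal (z := fun i => v i ^ t) hA

end cofinal

section powerseries

open MvPowerSeries

variable {S ι κ : Type} [CommRing S] {σ : ι → κ} {t : ℕ}

/-- The exponent of `∏ i ∈ A, X (σ i) ^ t`. -/
def expo (σ : ι → κ) (t : ℕ) (A : Finset ι) : κ →₀ ℕ := ∑ i ∈ A, Finsupp.single (σ i) t

theorem prod_X_pow (A : Finset ι) :
    ∏ i ∈ A, (X (σ i) : MvPowerSeries κ S) ^ t = monomial (expo σ t A) 1 := by
  classical
  induction A using Finset.induction_on with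
  | empty => rfl
  | insert i A hi ih =>
    rw [Finset.prod_insert hi, ih, X_pow_eq, monomial_mul_monomial, one_mul, expo, expo,
      Finset.sum_insert hi]

theorem expo_apply [DecidableEq ι] (hσ : Function.Injective σ) (A : Finset ι) (i : ι) :
    expo σ t A (σ i) = if i ∈ A then t else 0 := by
  classical
  simp [expo, Finsupp.finsetSum_apply, Finsupp.single_apply, hσ.eq_iff]

theorem expo_le_iff (hσ : Function.Injective σ) {A : Finset ι} {d : κ →₀ ℕ} :
    expo σ t A ≤ d ↔ ∀ i ∈ A, t ≤ d (σ i) := by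
  classical
  constructor
  · intro h i hi
    simpa [expo_apply hσ, hi] using h (σ i)
  · intro h k
    by_cases hk : ∃ i ∈ A, σ i = k
    · obtain ⟨i, hi, rfl⟩ := hk
      simpa [expo_apply hσ, hi] using h i hi
    · have : expo σ t A k = 0 := by
        simp only [expo, Finsupp.finsetSum_apply]
        refine Finset.sum_eq_zero fun i hi => Finsupp.single_eq_of_ne fun e => hk ⟨i, hi, e.symm⟩
      rw [this]
      exact Nat.zero_le _

/-- A power series lies in a monomial ideal if and only if all its monomials do. -/
theorem mem_monIdeal_iff {𝒜 : Finset (Finset ι)} {f : MvPowerSeries κ S} :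
    f ∈ monIdeal (fun i => (X (σ i) : MvPowerSeries κ S) ^ t) 𝒜 ↔
      ∀ d, coeff d f ≠ 0 → ∃ A ∈ 𝒜, expo σ t A ≤ d := by
  classical
  constructor
  · intro hf
    refine Submodule.span_induction (p := fun f _ => ∀ d, coeff d f ≠ 0 →
      ∃ A ∈ 𝒜, expo σ t A ≤ d) ?_ ?_ ?_ ?_ hf
    · rintro _ ⟨A, hA, rfl⟩ d hd
      refine ⟨A, hA, ?_⟩
      simp only [prod_X_pow, coeff_monomial] at hd
      exact (of_not_not fun h => hd (if_neg fun e => h e.ge))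
    · simp
    · intro f g _ _ hf hg d hd
      by_cases h : coeff d f = 0
      · exact hg d (by simpa [h] using hd)
      · exact hf d h
    · intro a f _ hf d hd
      rw [smul_eq_mul, coeff_mul] at hd
      obtain ⟨p, hp, hne⟩ := Finset.exists_ne_zero_of_sum_ne_zero hd
      obtain ⟨A, hA, hle⟩ := hf p.2 (right_ne_zero_of_mul hne)
      refine ⟨A, hA, hle.trans ?_⟩
      rw [← Finset.HasAntidiagonal.mem_antidiagonal.1 hp]
      exact le_add_self
  · intro hf
    induction 𝒜 using Finset.induction_on generalizing f with
    | empty =>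
      have : f = 0 := MvPowerSeries.ext fun d => of_not_not fun h => by simpa using hf d h
      exact this ▸ zero_mem _
    | insert A 𝒜 _ ih =>
      -- `g` collects the monomials of `f` divisible by `z^A`, divided by `z^A`.
      let g : MvPowerSeries κ S := fun d => coeff (d + expo σ t A) f
      have hmono : monIdeal (fun i => (X (σ i) : MvPowerSeries κ S) ^ t) 𝒜 ≤
          monIdeal (fun i => (X (σ i) : MvPowerSeries κ S) ^ t) (insert A 𝒜) :=
        Ideal.span_mono (Set.image_mono (by simp))
      have h₁ : f - g * monomial (expo σ t A) 1 ∈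
          monIdeal (fun i => (X (σ i) : MvPowerSeries κ S) ^ t) 𝒜 := by
        refine ih fun d hd => ?_
        by_cases hA : expo σ t A ≤ d
        · refine absurd ?_ hd
          have : coeff (d - expo σ t A) g = coeff d f := by
            change coeff (d - expo σ t A + expo σ t A) f = _
            rw [tsub_add_cancel_of_le hA]
          rw [map_sub, coeff_mul_monomial, if_pos hA, this, mul_one, sub_self]
        · rw [map_sub, coeff_mul_monomial, if_neg hA, sub_zero] at hd
          obtain ⟨C, hC, hle⟩ := hf d hd
          rcases Finset.mem_insert.1 hC with rfl | hC
          · exact absurd hle hA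
          · exact ⟨C, hC, hle⟩
      have h₂ : g * monomial (expo σ t A) 1 ∈
          monIdeal (fun i => (X (σ i) : MvPowerSeries κ S) ^ t) (insert A 𝒜) := by
        rw [← prod_X_pow]
        exact Ideal.mul_mem_left _ _
          (prod_mem_monIdeal (z := fun i => X (σ i) ^ t) (Finset.mem_insert_self A 𝒜))
      simpa using add_mem (hmono h₁) h₂

/-- Powers of distinct variables are independent: on exponents, `z^A ∣ m * z^B` implies
`z^(A \ B) ∣ m`. -/
theorem indep_X_pow [DecidableEq ι] (hσ : Function.Injective σ) (t : ℕ) :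
    Indep (fun i => (X (σ i) : MvPowerSeries κ S) ^ t) := by
  intro 𝒜 𝒞 B f hC hf
  rw [prod_X_pow, mem_monIdeal_iff] at hf
  refine mem_monIdeal_iff.2 fun d hd => ?_
  obtain ⟨A, hA, hle⟩ := hf (d + expo σ t B) (by rwa [coeff_add_mul_monomial, mul_one])
  obtain ⟨C, hC, hCA⟩ := hC A hA
  refine ⟨C, hC, (expo_le_iff hσ).2 fun i hi => ?_⟩
  obtain ⟨hiA, hiB⟩ := Finset.mem_sdiff.1 (hCA hi)
  simpa [expo_apply hσ, hiB] using (expo_le_iff hσ).1 hle i hiA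

end powerseries

/-! ### The ideal of the projective plane -/

/-- The labelling of the variables: `1, 2, 4, 5, 3` is the cyclic order of the vertices of the
Möbius band, `0` the cone point, and `6, 7` are `y 0, y 1`. -/
def label : Fin 8 → Fin 10 := ![1, 2, 4, 5, 3, 0, 6, 7]

theorem J_eq : J = monIdeal (fun i => (MvPowerSeries.X (label i) : T))
    (insert {7} (insert {6} nonfaces)) := by
  have hx0 : (MvPowerSeries.X (label 5) : T) = x 0 := rfl
  have hx1 : (MvPowerSeries.X (label 0) : T) = x 1 := rfl
  have hx2 : (MvPowerSeries.X (label 1) : T) = x 2 := rfl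
  have hx3 : (MvPowerSeries.X (label 4) : T) = x 3 := rfl
  have hx4 : (MvPowerSeries.X (label 2) : T) = x 4 := rfl
  have hx5 : (MvPowerSeries.X (label 3) : T) = x 5 := rfl
  have hy0 : (MvPowerSeries.X (label 6) : T) = y 0 := rfl
  have hy1 : (MvPowerSeries.X (label 7) : T) = y 1 := rfl
  rw [J, Igens, Ideal.add_eq_sup, ← Ideal.span_union, monIdeal]
  congr 1
  simp only [nonfaces, Finset.coe_insert, Finset.coe_singleton, Set.image_insert_eq,
    Set.image_singleton]
  simp [Finset.prod_insert, hx0, hx1, hx2, hx3, hx4, hx5, hy0, hy1]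
  ext f
  simp only [Set.mem_insert_iff, Set.mem_singleton_iff]
  have e₁ : x 1 * (x 2 * x 5) = x 1 * x 2 * x 5 := by ring
  have e₂ : x 2 * (x 4 * x 3) = x 2 * x 3 * x 4 := by ring
  have e₃ : x 4 * (x 5 * x 1) = x 1 * x 4 * x 5 := by ring
  have e₄ : x 5 * (x 3 * x 2) = x 2 * x 3 * x 5 := by ring
  have e₅ : x 3 * (x 1 * x 4) = x 1 * x 3 * x 4 := by ring
  have e₆ : x 1 * (x 2 * x 0) = x 0 * x 1 * x 2 := by ring
  have e₇ : x 2 * (x 4 * x 0) = x 0 * x 2 * x 4 := by ring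
  have e₈ : x 4 * (x 5 * x 0) = x 0 * x 4 * x 5 := by ring
  have e₉ : x 5 * (x 3 * x 0) = x 0 * x 3 * x 5 := by ring
  have e₁₀ : x 3 * (x 1 * x 0) = x 0 * x 1 * x 3 := by ring
  rw [e₁, e₂, e₃, e₄, e₅, e₆, e₇, e₈, e₉, e₁₀]
  constructor <;> rintro (h | h | h | h | h | h | h | h | h | h | h | h) <;>
    simp only [h, true_or, or_true]

/-- The ideals generated by the `t`-th powers of the generators of `J` are cofinal with the
powers of `J`, and have the desired properties. -/
theorem two_smul_cofinal (t : ℕ) : ∃ (s : ℕ) (K : Ideal T), J ^ s ≤ K ∧ K ≤ J ^ t ∧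
    HasProjectiveDimensionLT (ModuleCat.of T (T ⧸ K)) 7 ∧
    ∀ e : Ext (ModuleCat.of T (T ⧸ K)) (ModuleCat.of T T) 6, 2 • e = 0 := by
  rw [J_eq]
  obtain ⟨s, hs⟩ := exists_pow_le_monIdeal_pow (fun i => (MvPowerSeries.X (label i) : T))
    (insert {7} (insert {6} nonfaces)) t
  exact ⟨s, _, hs, monIdeal_pow_le _ _ t,
    ext_nonfaces _ (indep_X_pow (by decide) t) (ModuleCat.of T T)⟩

end RP2

theorem H7_eq_zero_and_two_smul_H6_eq_zero :
    Subsingleton ((localCohomology J 7).obj (ModuleCat.of T T)) ∧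
      ∀ u : (localCohomology J 6).obj (ModuleCat.of T T), (2 : T) • u = 0 := by
  constructor
  · refine subsingleton_of_forall_eq 0 fun u => ?_
    have := RP2.smul_localCohomology_eq_zero J 6 1 (ModuleCat.of T T) (fun t => ?_) u
    · rwa [Nat.cast_one, one_smul] at this
    · obtain ⟨s, K, h₁, h₂, h₃, -⟩ := RP2.two_smul_cofinal t
      exact ⟨s, K, h₁, h₂, fun e => by
        rw [one_smul]
        exact CategoryTheory.Abelian.Ext.eq_zero_of_hasProjectiveDimensionLT e 7 le_rfl⟩
  · intro u
    have := RP2.smul_localCohomology_eq_zero J 5 2 (ModuleCat.of T T) (fun t => ?_) u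
    · rwa [Nat.cast_ofNat] at this
    · obtain ⟨s, K, h₁, h₂, -, h₄⟩ := RP2.two_smul_cofinal t
      exact ⟨s, K, h₁, h₂, h₄⟩
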